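/- Let n ≥ 3 and define B_k = Σ_{i=k}^{n} (−1)^{i−k} A_i ∈ R for 3 ≤ k ≤ n (so B_n = A_n and A_k = B_k + B_{k+1} for 3 ≤ k ≤ n−1). Then for every j with 3 ≤ j ≤ n, one has in ⋀^{n−2}_K Ω_{K/ℂ}: ι_{V₁}ι_{V₂}⋯ι_{V_{n−1}} ( (A₁A₃⋯A_{j−1}·B_j B_{j+1}⋯B_n)^{−1} Ω ) = (−1)^{n−j} dlog(A₁/B_j) ∧ dlog(A₃/B_j) ∧ dlog(A₄/B_j) ∧ ⋯ ∧ dlog(A_{j−1}/B_j) ∧ dlog(B_{j+1}/B_j) ∧ ⋯ ∧ dlog(B_n/B_j). (This is Proposition 3.5 of the paper; the case j = n is the Schubert divisor case and j = 3 is the Rietsch divisor case.) -/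

import Mathlib

/-!
Proposition 3.5 of the paper: for `B_k = ∑_{i=k}^n (−1)^{i−k} A_i` and every
`3 ≤ j ≤ n`,
`ι_{V₁}⋯ι_{V_{n−1}} ((A₁A₃⋯A_{j−1}B_j⋯B_n)⁻¹ Ω)
  = (−1)^{n−j} dlog(A₁/B_j) ∧ dlog(A₃/B_j) ∧ ⋯ ∧ dlog(A_{j−1}/B_j)
      ∧ dlog(B_{j+1}/B_j) ∧ ⋯ ∧ dlog(B_n/B_j)`
for the two-step flag variety `Fℓ_{1,n−1;n}`.
-/

set_option synthInstance.maxHeartbeats 1000000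
set_option maxHeartbeats 1000000

noncomputable section

open MvPolynomial

/-- Index type for the `2n−3` variables: `z_j` for `2 ≤ j ≤ n` and `ẑ_j` for
`2 ≤ j ≤ n−1`. -/
abbrev FlagIdx (n : ℕ) := {j : ℕ // 2 ≤ j ∧ j ≤ n} ⊕ {j : ℕ // 2 ≤ j ∧ j ≤ n - 1}

/-- The coordinate ring `R = ℂ[z₂,…,z_n, ẑ₂,…,ẑ_{n−1}]`. -/
abbrev FlagR (n : ℕ) := MvPolynomial (FlagIdx n) ℂ

/-- The fraction field `K = Frac(R)`. -/
abbrev FlagK (n : ℕ) := FractionRing (FlagR n)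

/-- The coordinate `z_j` (with the convention `z₁ = 1`). -/
def flagZ (n j : ℕ) : FlagR n :=
  if h : 2 ≤ j ∧ j ≤ n then X (Sum.inl ⟨j, h⟩) else 1

/-- The coordinate `ẑ_j` (with the convention `ẑ_n = 1`). -/
def flagZh (n j : ℕ) : FlagR n :=
  if h : 2 ≤ j ∧ j ≤ n - 1 then X (Sum.inr ⟨j, h⟩) else 1

/-- `A_j = z_j ẑ_j` for `j ≥ 2` (so `A_n = z_n`), and
`A₁ = A₂ + ∑_{j=3}^n (−1)^j A_j`. -/
def flagA (n j : ℕ) : FlagR n :=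
  if j = 1 then
    flagZ n 2 * flagZh n 2 + ∑ k ∈ Finset.Icc 3 n, (-1 : FlagR n) ^ k * (flagZ n k * flagZh n k)
  else flagZ n j * flagZh n j

/-- The ℂ-derivations `V_{i−1} = z_i ∂/∂z_i − ẑ_i ∂/∂ẑ_i` for `2 ≤ i ≤ n−1`, and
`V_{n−1} = z_n ∂/∂z_n + ∑_{j=2}^{n−1} ẑ_j ∂/∂ẑ_j`. -/
def flagV (n i : ℕ) : Derivation ℂ (FlagR n) (FlagR n) :=
  if i = n - 1 then
    MvPolynomial.mkDerivation ℂ (fun s => match s with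
      | Sum.inl ⟨j, _⟩ => if j = n then flagZ n j else 0
      | Sum.inr ⟨j, _⟩ => flagZh n j)
  else
    MvPolynomial.mkDerivation ℂ (fun s => match s with
      | Sum.inl ⟨j, _⟩ => if j = i + 1 then flagZ n j else 0
      | Sum.inr ⟨j, _⟩ => if j = i + 1 then -(flagZh n j) else 0)

/-- Contraction (interior product) of `⋀_A Ω_{A/ℂ}` by the `A`-linear functional
`Ω_{A/ℂ} → A` determined by `dg ↦ V g`, for a ℂ-derivation `V` of `A`. -/
def contrDer {A : Type} [CommRing A] [Algebra ℂ A] (V : Derivation ℂ A A) :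
    ExteriorAlgebra A (Ω[A⁄ℂ]) →ₗ[A] ExteriorAlgebra A (Ω[A⁄ℂ]) :=
  CliffordAlgebra.contractLeft ((KaehlerDifferential.linearMapEquivDerivation ℂ A).symm V)

/-- `dlog f = f⁻¹ df ∈ Ω_{K/ℂ}`. -/
def dlog (n : ℕ) (f : FlagK n) : Ω[FlagK n⁄ℂ] :=
  f⁻¹ • KaehlerDifferential.D ℂ (FlagK n) f

/-- The image of `A_j` in `K`. -/
def flagAK (n j : ℕ) : FlagK n := algebraMap (FlagR n) (FlagK n) (flagA n j)

/-- `Ω = dz₂∧dẑ₂∧⋯∧dz_{n−1}∧dẑ_{n−1}∧dz_n`, viewed in `⋀_K Ω_{K/ℂ}`. -/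
def flagOmegaK (n : ℕ) : ExteriorAlgebra (FlagK n) (Ω[FlagK n⁄ℂ]) :=
  (((List.Ico 2 n).map (fun j =>
      ExteriorAlgebra.ι (FlagK n)
        (KaehlerDifferential.D ℂ (FlagK n) (algebraMap (FlagR n) (FlagK n) (flagZ n j))) *
      ExteriorAlgebra.ι (FlagK n)
        (KaehlerDifferential.D ℂ (FlagK n) (algebraMap (FlagR n) (FlagK n) (flagZh n j))))).prod) *
    ExteriorAlgebra.ι (FlagK n)
      (KaehlerDifferential.D ℂ (FlagK n) (algebraMap (FlagR n) (FlagK n) (flagZ n n)))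

/-- `B_k = ∑_{i=k}^n (−1)^{i−k} A_i` (so `B_n = A_n` and `A_k = B_k + B_{k+1}`). -/
def flagB (n k : ℕ) : FlagR n :=
  ∑ i ∈ Finset.Icc k n, (-1 : FlagR n) ^ (i - k) * flagA n i

/-- The image of `B_k` in `K`. -/
def flagBK (n k : ℕ) : FlagK n := algebraMap (FlagR n) (FlagK n) (flagB n k)

section AbstractExt
open ExteriorAlgebra
variable {K M : Type} [Field K] [AddCommGroup M] [Module K M]

local notation "ctr" => CliffordAlgebra.contractLeft (Q := (0 : QuadraticForm K M))

theorem ctr_ι_mul (d : Module.Dual K M) (a : M) (b : ExteriorAlgebra K M) :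
    ctr d (ι K a * b) = d a • b - ι K a * ctr d b :=
  CliffordAlgebra.contractLeft_ι_mul ..

theorem ext_sq (x : M) (Y : ExteriorAlgebra K M) : ι K x * (ι K x * Y) = 0 := by
  rw [← mul_assoc, ι_sq_zero, zero_mul]

theorem ext_swap (x y : M) (Y : ExteriorAlgebra K M) :
    ι K x * (ι K y * Y) = - (ι K y * (ι K x * Y)) := by
  have h : ι K x * ι K y = - (ι K y * ι K x) :=
    eq_neg_of_add_eq_zero_left (ExteriorAlgebra.ι_add_mul_swap x y)
  rw [← mul_assoc, h, neg_mul, mul_assoc]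

theorem ctr_list_zero (d : Module.Dual K M) (L : List ℕ) (f : ℕ → M)
    (h : ∀ k ∈ L, d (f k) = 0) (Y : ExteriorAlgebra K M) (hY : ctr d Y = 0) :
    ctr d ((L.map (fun k => ι K (f k))).prod * Y) = 0 := by
  induction L with
  | nil => simpa using hY
  | cons k L ih =>
    rw [List.map_cons, List.prod_cons, mul_assoc, ctr_ι_mul, h k (by simp),
      ih (fun k hk => h k (by simp [hk]))]
    simp

theorem ctr_pairs (d : Module.Dual K M) (L : List ℕ) (f g : ℕ → M)
    (h : ∀ k ∈ L, d (f k) = 0) (h' : ∀ k ∈ L, d (g k) = 0) (Y : ExteriorAlgebra K M) :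
    ctr d ((L.map (fun k => ι K (f k) * ι K (g k))).prod * Y) =
      (L.map (fun k => ι K (f k) * ι K (g k))).prod * ctr d Y := by
  induction L with
  | nil => simp
  | cons k L ih =>
    rw [List.map_cons, List.prod_cons, mul_assoc, mul_assoc, ctr_ι_mul, ctr_ι_mul,
      h k (by simp), h' k (by simp),
      ih (fun k hk => h k (by simp [hk])) (fun k hk => h' k (by simp [hk]))]
    simp [mul_assoc]

theorem foldr_ctr_comm (E : Module.Dual K M) (v : ℕ → Module.Dual K M) (L : List ℕ)
    (Y : ExteriorAlgebra K M) :
    L.foldr (fun i ω => ctr (v i) ω) (ctr E Y) =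
      (-1 : K) ^ L.length • ctr E (L.foldr (fun i ω => ctr (v i) ω) Y) := by
  induction L with
  | nil => simp
  | cons k L ih =>
    rw [List.foldr_cons, ih, map_smul, CliffordAlgebra.contractLeft_comm, List.foldr_cons,
      List.length_cons, pow_succ]
    simp

theorem foldr_strip (v : ℕ → Module.Dual K M) (a β : ℕ → M) (m : ℕ) (hm : 1 ≤ m)
    (h1 : ∀ i, 1 ≤ i → i < m → v i (a (i + 1)) = 1)
    (h2 : ∀ i k, 1 ≤ i → i < m → 2 ≤ k → k ≤ i → v i (a k) = 0)
    (h3 : ∀ i k, 1 ≤ i → i < m → 2 ≤ k → k ≤ m → v i (β k) = 0)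
    (Y : ExteriorAlgebra K M) (hY : ∀ i, 1 ≤ i → i < m → ctr (v i) Y = 0) :
    (List.Ico 1 m).foldr (fun i ω => ctr (v i) ω)
      (((List.Ico 2 (m + 1)).map (fun k => ι K (a k) * ι K (β k))).prod * Y) =
      ((List.Ico 2 (m + 1)).map (fun k => ι K (β k))).prod * Y := by
  induction m, hm using Nat.le_induction generalizing Y with
  | base => simp
  | succ m hm ih =>
    rw [List.Ico.succ_top hm, List.Ico.succ_top (by omega : 2 ≤ m + 1), List.foldr_append]
    simp only [List.map_append, List.prod_append, List.map_cons, List.map_nil, List.prod_cons,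
      List.prod_nil, mul_one, List.foldr_cons, List.foldr_nil]
    rw [mul_assoc, ctr_pairs, mul_assoc, ctr_ι_mul, h1 m hm (by omega), ctr_ι_mul,
      h3 m (m+1) hm (by omega) (by omega) le_rfl, hY m hm (by omega)]
    · simp only [one_smul, zero_smul, mul_zero, sub_zero]
      rw [ih (fun i hi him => h1 i hi (by omega)) (fun i k hi him => h2 i k hi (by omega))
        (fun i k hi him hk hkm => h3 i k hi (by omega) hk (by omega)), mul_assoc]
      intro i hi him
      rw [ctr_ι_mul, h3 i (m+1) hi (by omega) (by omega) le_rfl, hY i hi (by omega)]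
      simp
    · intro k hk
      rw [List.Ico.mem] at hk
      exact h2 m k hm (by omega) hk.1 (by omega)
    · intro k hk
      rw [List.Ico.mem] at hk
      exact h3 m k hm (by omega) hk.1 (by omega)

theorem ext_shift (x : M) (φ : ℕ → M) (L : List ℕ) (Y Z : ExteriorAlgebra K M)
    (hYZ : ι K x * Y = ι K x * Z) :
    ι K x * ((L.map (fun k => ι K (φ k))).prod * Y) =
      ι K x * ((L.map (fun k => ι K (φ k - x))).prod * Z) := by
  induction L with
  | nil => simpa using hYZ
  | cons k L ih =>
    rw [List.map_cons, List.prod_cons, List.map_cons, List.prod_cons, mul_assoc, mul_assoc,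
      ext_swap x, ih, ext_swap x (φ k - x), map_sub, sub_mul, ext_sq, sub_zero]

theorem ctr_shift (E : Module.Dual K M) (x : M) (Y Z : ExteriorAlgebra K M)
    (hx : E x = 1) (hYZ : ι K x * Y = ι K x * Z) (hZ : ctr E Z = 0) :
    Z = ctr E (ι K x * Y) := by
  rw [hYZ, ctr_ι_mul, hx, hZ]; simp

theorem ext_move (x : M) (φ : ℕ → M) (L : List ℕ) (Y : ExteriorAlgebra K M) :
    ι K x * ((L.map (fun k => ι K (φ k))).prod * Y) =
      (-1 : K) ^ L.length • ((L.map (fun k => ι K (φ k))).prod * (ι K x * Y)) := by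
  induction L with
  | nil => simp
  | cons k L ih =>
    rw [List.map_cons, List.prod_cons, mul_assoc, ext_swap, ih, List.length_cons, pow_succ]
    simp [mul_assoc]

theorem ext_smul_list (c : ℕ → K) (φ : ℕ → M) (L : List ℕ) :
    (L.map (fun k => ι K (c k • φ k))).prod =
      (L.map c).prod • (L.map (fun k => ι K (φ k))).prod := by
  induction L with
  | nil => simp
  | cons k L ih =>
    rw [List.map_cons, List.prod_cons, ih, map_smul, smul_mul_smul_comm]
    simp

theorem ext_tri (n : ℕ) (α β : ℕ → M) (j : ℕ) (hj : j ≤ n + 1) (h0 : β (n + 1) = 0)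
    (h : ∀ k, j ≤ k → k ≤ n → β k = α k - β (k + 1)) :
    ((List.Ico j (n + 1)).map (fun k => ι K (β k))).prod =
      ((List.Ico j (n + 1)).map (fun k => ι K (α k))).prod := by
  induction hj using Nat.decreasingInduction with
  | self => simp
  | of_succ j hj ih =>
    have hj' : j < n + 1 := hj
    rw [List.Ico.eq_cons hj']
    simp only [List.map_cons, List.prod_cons]
    have ih := ih (fun k hk => h k (by omega))
    rw [h j le_rfl (by omega), map_sub, sub_mul, ih]
    have : ι K (β (j+1)) * ((List.Ico (j+1) (n + 1)).map (fun k => ι K (α k))).prod = 0 := by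
      rcases Nat.lt_or_ge j n with h1 | h1
      · rw [← ih, List.Ico.eq_cons (by omega : j + 1 < n + 1)]
        simp only [List.map_cons, List.prod_cons]
        exact ext_sq _ _
      · have : j = n := by omega
        subst this
        simp [h0]
    rw [this, sub_zero]

/-- The right-hand side. -/
theorem abs_rhs (n j : ℕ) (hj : 3 ≤ j) (hjn : j ≤ n) (E : Module.Dual K M)
    (cA cB : ℕ → K) (c1 : K) (α β : ℕ → M) (α1 : M)
    (hA : ∀ k, 3 ≤ k → k ≤ n → cA k ≠ 0) (hB : ∀ k, 3 ≤ k → k ≤ n → cB k ≠ 0) (h1 : c1 ≠ 0)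
    (EA : ∀ k, 3 ≤ k → k ≤ n → E (α k) = cA k) (EB : ∀ k, 3 ≤ k → k ≤ n → E (β k) = cB k)
    (E1 : E α1 = c1) (h0 : β (n + 1) = 0)
    (hAB : ∀ k, 3 ≤ k → k ≤ n → β k = α k - β (k + 1))
    (h12 : α1 = α 2 - β 3) :
    ι K (c1⁻¹ • α1 - (cB j)⁻¹ • β j) *
      ((List.Ico 3 j).map (fun k => ι K ((cA k)⁻¹ • α k - (cB j)⁻¹ • β j))).prod *
      ((List.Ico (j + 1) (n + 1)).map
        (fun k => ι K ((cB k)⁻¹ • β k - (cB j)⁻¹ • β j))).prod =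
    (-1 : K) ^ j • ((c1 * (∏ k ∈ Finset.Ico 3 j, cA k) * ∏ k ∈ Finset.Icc j n, cB k)⁻¹ •
      ctr E ((List.Ico 2 (n + 1)).map (fun k => ι K (α k))).prod) := by
  set x := (cB j)⁻¹ • β j with hx
  have hEx : E x = 1 := by
    rw [hx, map_smul, EB j hj hjn, smul_eq_mul, inv_mul_cancel₀ (hB j hj hjn)]
  have key := ctr_shift E x
    (ι K (c1⁻¹ • α1) * (((List.Ico 3 j).map (fun k => ι K ((cA k)⁻¹ • α k))).prod *
      (((List.Ico (j + 1) (n + 1)).map (fun k => ι K ((cB k)⁻¹ • β k))).prod * 1)))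
    (ι K (c1⁻¹ • α1 - x) * (((List.Ico 3 j).map (fun k => ι K ((cA k)⁻¹ • α k - x))).prod *
      (((List.Ico (j + 1) (n + 1)).map (fun k => ι K ((cB k)⁻¹ • β k - x))).prod * 1)))
    hEx ?_ ?_
  · rw [mul_one] at key
    rw [mul_assoc, key, mul_one, ext_smul_list (fun k => (cA k)⁻¹),
      ext_smul_list (fun k => (cB k)⁻¹), hx]
    simp only [map_smul, smul_mul_assoc, mul_smul_comm, smul_smul]
    have hmv := ext_move (K := K) (β j) α (List.Ico 3 j)
      ((List.Ico (j + 1) (n + 1)).map (fun k => ι K (β k))).prod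
    have e2 : ι K (β j) * ((List.Ico (j + 1) (n + 1)).map (fun k => ι K (β k))).prod =
        ((List.Ico j (n + 1)).map (fun k => ι K (β k))).prod := by
      rw [List.Ico.eq_cons (by omega : j < n + 1)]; simp
    have e3 := ext_tri (K := K) n α β j (by omega) h0 (fun k hk => hAB k (by omega))
    have e4 : ((List.Ico 3 j).map (fun k => ι K (α k))).prod *
        ((List.Ico j (n + 1)).map (fun k => ι K (α k))).prod =
        ((List.Ico 3 (n + 1)).map (fun k => ι K (α k))).prod := by
      rw [← List.prod_append, ← List.map_append, List.Ico.append_consecutive hj (by omega)]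
    have e5 : ι K (β 3) * ((List.Ico 3 (n + 1)).map (fun k => ι K (α k))).prod = 0 := by
      rw [← ext_tri (K := K) n α β 3 (by omega) h0 hAB, List.Ico.eq_cons (by omega : 3 < n + 1)]
      simp only [List.map_cons, List.prod_cons]
      exact ext_sq _ _
    have e6 : ι K α1 * ((List.Ico 3 (n + 1)).map (fun k => ι K (α k))).prod =
        ((List.Ico 2 (n + 1)).map (fun k => ι K (α k))).prod := by
      rw [h12, map_sub, sub_mul, e5, sub_zero, List.Ico.eq_cons (by omega : 2 < n + 1)]
      simp
    rw [ext_swap, hmv, e2, e3, e4, mul_smul_comm, e6]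
    rw [← smul_neg, map_smul, map_neg, smul_smul]
    have p1 : ((List.Ico 3 j).map (fun k => (cA k)⁻¹)).prod = (∏ k ∈ Finset.Ico 3 j, cA k)⁻¹ := by
      rw [← Finset.prod_inv_distrib]; rfl
    have p2 : (cB j)⁻¹ * ((List.Ico (j + 1) (n + 1)).map (fun k => (cB k)⁻¹)).prod =
        (∏ k ∈ Finset.Icc j n, cB k)⁻¹ := by
      have : Finset.Icc j n = Finset.Ico j (n + 1) := by ext; simp only [Finset.mem_Icc, Finset.mem_Ico]; omega
      rw [← Finset.prod_inv_distrib, this, Finset.prod_eq_prod_Ico_succ_bot (by omega)]; rfl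
    have hlen : (-1 : K) ^ j = - (-1) ^ (List.Ico 3 j).length := by
      obtain ⟨m, rfl⟩ := Nat.exists_eq_add_of_le hj
      rw [List.Ico.length, Nat.add_sub_cancel_left, pow_add]; norm_num
    rw [hlen, smul_neg, ← neg_smul]
    congr 1
    rw [mul_inv, mul_inv, ← p1, ← p2]
    ring
  · have := ext_shift (K := K) x (fun _ => c1⁻¹ • α1) [0] _ _
      (ext_shift x (fun k => (cA k)⁻¹ • α k) (List.Ico 3 j) _ _
      (ext_shift x (fun k => (cB k)⁻¹ • β k) (List.Ico (j + 1) (n + 1)) (1 : ExteriorAlgebra K M)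
        1 rfl))
    simpa using this
  · rw [ctr_ι_mul, ctr_list_zero, map_sub, hEx, map_smul, E1, smul_eq_mul, inv_mul_cancel₀ h1]
    · simp
    · intro k hk
      rw [List.Ico.mem] at hk
      rw [map_sub, hEx, map_smul, EA k hk.1 (by omega), smul_eq_mul,
        inv_mul_cancel₀ (hA k hk.1 (by omega)), sub_self]
    · apply ctr_list_zero
      · intro k hk
        rw [List.Ico.mem] at hk
        rw [map_sub, hEx, map_smul, EB k (by omega) (by omega), smul_eq_mul,
          inv_mul_cancel₀ (hB k (by omega) (by omega)), sub_self]
      · exact CliffordAlgebra.contractLeft_one ..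

/-- The left-hand side. -/
theorem abs_lhs (n : ℕ) (hn : 3 ≤ n) (v : ℕ → Module.Dual K M) (z : ℕ → K) (ζ η α : ℕ → M)
    (hz : ∀ k, 2 ≤ k → k < n → z k ≠ 0)
    (hα : ∀ k, 2 ≤ k → k < n → ∃ w : K, α k = z k • η k + w • ζ k) (hαn : α n = ζ n)
    (h1 : ∀ i, 1 ≤ i → i < n - 1 → v i (ζ (i + 1)) = z (i + 1))
    (h2 : ∀ i k, 1 ≤ i → i < n - 1 → 2 ≤ k → k ≤ i → v i (ζ k) = 0)
    (h3 : ∀ i k, 1 ≤ i → i < n - 1 → 2 ≤ k → k ≤ n → v i (α k) = 0) (c : K) :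
    (List.Ico 1 n).foldr (fun i ω => ctr (v i) ω)
      (c • (((List.Ico 2 n).map (fun k => ι K (ζ k) * ι K (η k))).prod * ι K (ζ n))) =
    (-1 : K) ^ n • (c • ctr (v (n - 1)) ((List.Ico 2 (n + 1)).map (fun k => ι K (α k))).prod) := by
  have hpair : (List.Ico 2 n).map (fun k => ι K (ζ k) * ι K (η k)) =
      (List.Ico 2 n).map (fun k => ι K ((z k)⁻¹ • ζ k) * ι K (α k)) := by
    apply List.map_congr_left
    intro k hk
    rw [List.Ico.mem] at hk
    obtain ⟨w, hw⟩ := hα k hk.1 hk.2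
    rw [hw, map_add, map_smul, map_smul, map_smul, mul_add, smul_mul_smul_comm,
      smul_mul_smul_comm, ι_sq_zero, inv_mul_cancel₀ (hz k hk.1 hk.2)]
    simp
  obtain ⟨m, rfl⟩ : ∃ m, n = m + 1 := ⟨n - 1, by omega⟩
  simp only [Nat.add_sub_cancel] at *
  have hfs : ∀ (L : List ℕ) (Y : ExteriorAlgebra K M),
      L.foldr (fun i ω => ctr (v i) ω) (c • Y) = c • L.foldr (fun i ω => ctr (v i) ω) Y := by
    intro L Y
    induction L with
    | nil => rfl
    | cons k L ih => simp only [List.foldr_cons, ih, map_smul]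
  rw [hfs, hpair, List.Ico.succ_top (by omega : 1 ≤ m), List.foldr_append]
  simp only [List.foldr_cons, List.foldr_nil]
  rw [foldr_ctr_comm, foldr_strip v (fun k => (z k)⁻¹ • ζ k) α m (by omega)]
  · rw [← hαn, List.Ico.succ_top (by omega : 2 ≤ m + 1), List.map_append, List.prod_append,
      List.Ico.length]
    have : (-1 : K) ^ (m + 1) = (-1) ^ (m - 1) := by
      obtain ⟨p, rfl⟩ : ∃ p, m = p + 1 := ⟨m - 1, by omega⟩
      simp [pow_succ]
    rw [this, smul_comm]
    simp
  · intro i hi him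
    rw [map_smul, h1 i hi him, smul_eq_mul, inv_mul_cancel₀ (hz _ (by omega) (by omega))]
  · intro i k hi him hk hki
    rw [map_smul, h2 i k hi him hk hki, smul_zero]
  · intro i k hi him hk hkm
    exact h3 i k hi him hk (by omega)
  · intro i hi him
    rw [← hαn, CliffordAlgebra.contractLeft_ι, h3 i (m+1) hi him (by omega) le_rfl, map_zero]

end AbstractExt

theorem flagA_of_ne (n k : ℕ) (h : k ≠ 1) : flagA n k = flagZ n k * flagZh n k := by
  simp [flagA, h]

theorem flagZh_self (n : ℕ) (hn : 3 ≤ n) : flagZh n n = 1 := by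
  rw [flagZh, dif_neg (by omega)]

theorem flagB_top (n : ℕ) : flagB n (n + 1) = 0 := by
  simp [flagB]

theorem flagB_rec (n k : ℕ) (hk : k ≤ n) : flagB n k = flagA n k - flagB n (k + 1) := by
  have : Finset.Icc k n = insert k (Finset.Icc (k + 1) n) := by
    ext; simp only [Finset.mem_Icc, Finset.mem_insert]; omega
  rw [flagB, this, Finset.sum_insert (by simp), flagB, sub_eq_add_neg, ← Finset.sum_neg_distrib]
  congr 1
  · simp
  · apply Finset.sum_congr rfl
    intro i hi
    rw [Finset.mem_Icc] at hi
    obtain ⟨p, rfl⟩ := Nat.exists_eq_add_of_le hi.1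
    have h1 : k + 1 + p - k = p + 1 := by omega
    have h2 : k + 1 + p - (k + 1) = p := by omega
    rw [h1, h2]; ring

theorem flagA_one (n : ℕ) : flagA n 1 = flagA n 2 - flagB n 3 := by
  rw [flagA_of_ne n 2 (by norm_num), flagB, sub_eq_add_neg, ← Finset.sum_neg_distrib, flagA,
    if_pos rfl]
  congr 1
  apply Finset.sum_congr rfl
  intro i hi
  rw [Finset.mem_Icc] at hi
  rw [flagA_of_ne n i (by omega)]
  obtain ⟨p, rfl⟩ := Nat.exists_eq_add_of_le hi.1
  rw [Nat.add_sub_cancel_left]; ring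

theorem flagV_Z (n i k : ℕ) (hi : i < n - 1) (hk : 2 ≤ k ∧ k ≤ n) :
    flagV n i (flagZ n k) = if k = i + 1 then flagZ n k else 0 := by
  conv_lhs => rw [flagV, if_neg (by omega), flagZ, dif_pos hk, mkDerivation_X]

theorem flagV_Zh (n i k : ℕ) (hi : i < n - 1) (hk : 2 ≤ k ∧ k ≤ n) :
    flagV n i (flagZh n k) = if k = i + 1 then - flagZh n k else 0 := by
  by_cases h : 2 ≤ k ∧ k ≤ n - 1
  · conv_lhs => rw [flagV, if_neg (by omega), flagZh, dif_pos h, mkDerivation_X]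
  · rw [if_neg (by omega), flagZh, dif_neg h, Derivation.map_one_eq_zero]

theorem flagV_A (n i k : ℕ) (hi : i < n - 1) (hk : 2 ≤ k ∧ k ≤ n) :
    flagV n i (flagA n k) = 0 := by
  rw [flagA_of_ne n k (by omega), Derivation.leibniz, flagV_Z n i k hi hk, flagV_Zh n i k hi hk]
  split_ifs
  · simp only [smul_eq_mul]; ring
  · simp

theorem flagE_A (n k : ℕ) (hn : 3 ≤ n) (hk : 2 ≤ k ∧ k ≤ n) :
    flagV n (n - 1) (flagA n k) = flagA n k := by
  have hz : flagV n (n - 1) (flagZ n k) = if k = n then flagZ n k else 0 := by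
    conv_lhs => rw [flagV, if_pos rfl, flagZ, dif_pos hk, mkDerivation_X]
  rw [flagA_of_ne n k (by omega), Derivation.leibniz, hz]
  by_cases h : k = n
  · subst h
    rw [flagZh_self k hn, Derivation.map_one_eq_zero]; simp
  · have hzh : flagV n (n - 1) (flagZh n k) = flagZh n k := by
      conv_lhs => rw [flagV, if_pos rfl, flagZh, dif_pos (by omega), mkDerivation_X]
    rw [hzh, if_neg h]; simp

theorem flagE_B (n k : ℕ) (hn : 3 ≤ n) (hk : 2 ≤ k) (hkn : k ≤ n + 1) :
    flagV n (n - 1) (flagB n k) = flagB n k := by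
  induction hkn using Nat.decreasingInduction with
  | self => simp [flagB_top]
  | of_succ k hk' ih =>
    rw [flagB_rec n k (by omega), map_sub, ih (by omega), flagE_A n k hn (by omega)]

theorem flag_eval (n m k : ℕ) (hn : 3 ≤ n) (hk : 2 ≤ k ∧ k ≤ n) :
    MvPolynomial.eval (Sum.elim (fun s => if s.1 = m then (1 : ℂ) else 0) (fun _ => 1))
      (flagA n k) = if k = m then 1 else 0 := by
  rw [flagA_of_ne n k (by omega), flagZ, dif_pos hk, map_mul, eval_X, flagZh]
  split_ifs <;> simp_all

theorem flag_evalB (n m k : ℕ) (hn : 3 ≤ n) (hm : m < k) (hk : 2 ≤ k) (hkn : k ≤ n + 1) :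
    MvPolynomial.eval (Sum.elim (fun s => if s.1 = m then (1 : ℂ) else 0) (fun _ => 1))
      (flagB n k) = 0 := by
  induction hkn using Nat.decreasingInduction with
  | self => simp [flagB_top]
  | of_succ k hk' ih =>
    rw [flagB_rec n k (by omega), map_sub, ih (by omega) (by omega),
      flag_eval n m k hn (by omega), if_neg (by omega), sub_zero]

theorem flagA_ne (n k : ℕ) (hn : 3 ≤ n) (hk : 2 ≤ k ∧ k ≤ n) : flagA n k ≠ 0 := by
  intro h
  have := flag_eval n k k hn hk
  rw [h] at this
  simp at this

theorem flagA1_ne (n : ℕ) (hn : 3 ≤ n) : flagA n 1 ≠ 0 := by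
  intro h
  have := flag_eval n 2 2 hn (by omega)
  have h2 := flag_evalB n 2 3 hn (by omega) (by omega) (by omega)
  rw [flagA_one, sub_eq_zero] at h
  rw [h, h2] at this
  simp at this

theorem flagB_ne (n k : ℕ) (hn : 3 ≤ n) (hk : 2 ≤ k ∧ k ≤ n) : flagB n k ≠ 0 := by
  intro h
  have := flag_eval n k k hn hk
  have h2 := flag_evalB n k (k+1) hn (by omega) (by omega) (by omega)
  rw [flagB_rec n k (by omega), sub_eq_zero] at h
  rw [h, h2] at this
  simp at this

theorem dlog_div' (n : ℕ) (f g : FlagK n) (hf : f ≠ 0) (hg : g ≠ 0) :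
    dlog n (f / g) = f⁻¹ • KaehlerDifferential.D ℂ (FlagK n) f -
      g⁻¹ • KaehlerDifferential.D ℂ (FlagK n) g := by
  rw [dlog, Derivation.leibniz_div, smul_smul, smul_sub, smul_smul, smul_smul]
  congr 2 <;> field_simp

/-- Proposition 3.5: for every `3 ≤ j ≤ n`,
`ι_{V₁}⋯ι_{V_{n−1}} ((A₁A₃⋯A_{j−1}·B_jB_{j+1}⋯B_n)⁻¹ Ω)
 = (−1)^{n−j} dlog(A₁/B_j) ∧ dlog(A₃/B_j) ∧ ⋯ ∧ dlog(A_{j−1}/B_j)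
     ∧ dlog(B_{j+1}/B_j) ∧ ⋯ ∧ dlog(B_n/B_j)`,
where the `ι_{V_i}` are the (unique) extensions of the derivations `V_i` to `K`. -/
theorem flag_general_contraction (n : ℕ) (hn : 3 ≤ n) (j : ℕ) (hj : 3 ≤ j ∧ j ≤ n)
    (W : ℕ → Derivation ℂ (FlagK n) (FlagK n))
    (hW : ∀ i, ∀ g : FlagR n,
      W i (algebraMap (FlagR n) (FlagK n) g) = algebraMap (FlagR n) (FlagK n) (flagV n i g)) :
    (List.Ico 1 n).foldr (fun i ω => contrDer (W i) ω)
        (((flagAK n 1 * (∏ k ∈ Finset.Ico 3 j, flagAK n k) *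
            ∏ k ∈ Finset.Icc j n, flagBK n k)⁻¹) • flagOmegaK n) =
      ((-1 : FlagK n) ^ (n - j)) •
        (ExteriorAlgebra.ι (FlagK n) (dlog n (flagAK n 1 / flagBK n j)) *
          (((List.Ico 3 j).map (fun k =>
            ExteriorAlgebra.ι (FlagK n) (dlog n (flagAK n k / flagBK n j)))).prod) *
          (((List.Ico (j + 1) (n + 1)).map (fun k =>
            ExteriorAlgebra.ι (FlagK n) (dlog n (flagBK n k / flagBK n j)))).prod)) := by
  obtain ⟨hj3, hjn⟩ := hj
  have inj : Function.Injective (algebraMap (FlagR n) (FlagK n)) :=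
    IsFractionRing.injective (FlagR n) (FlagK n)
  have ne : ∀ g : FlagR n, g ≠ 0 → algebraMap (FlagR n) (FlagK n) g ≠ 0 := fun g hg h =>
    hg (inj (by rw [h, map_zero]))
  have hA : ∀ k, 3 ≤ k → k ≤ n → flagAK n k ≠ 0 := fun k h1 h2 =>
    ne _ (flagA_ne n k hn (by omega))
  have hB : ∀ k, 3 ≤ k → k ≤ n → flagBK n k ≠ 0 := fun k h1 h2 =>
    ne _ (flagB_ne n k hn (by omega))
  have hA1 : flagAK n 1 ≠ 0 := ne _ (flagA1_ne n hn)
  set v : ℕ → Module.Dual (FlagK n) (Ω[FlagK n⁄ℂ]) := fun i =>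
    (KaehlerDifferential.linearMapEquivDerivation ℂ (FlagK n)).symm (W i) with hv
  have hvD : ∀ i g, v i (KaehlerDifferential.D ℂ (FlagK n) (algebraMap (FlagR n) (FlagK n) g)) =
      algebraMap (FlagR n) (FlagK n) (flagV n i g) := by
    intro i g
    rw [← hW]
    exact Derivation.liftKaehlerDifferential_comp_D (W i) _
  set d : FlagR n → Ω[FlagK n⁄ℂ] := fun g =>
    KaehlerDifferential.D ℂ (FlagK n) (algebraMap (FlagR n) (FlagK n) g) with hd
  have dsub : ∀ f g, d (f - g) = d f - d g := fun f g => by simp only [hd, map_sub]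
  have hl := abs_lhs n hn v (fun k => algebraMap (FlagR n) (FlagK n) (flagZ n k))
    (fun k => d (flagZ n k)) (fun k => d (flagZh n k)) (fun k => d (flagA n k))
    (by
      intro k h1 h2
      refine ne _ ?_
      have := flagA_ne n k hn (by omega)
      rw [flagA_of_ne n k (by omega)] at this
      exact left_ne_zero_of_mul this)
    (by
      intro k h1 h2
      refine ⟨algebraMap (FlagR n) (FlagK n) (flagZh n k), ?_⟩
      simp only [hd]
      rw [flagA_of_ne n k (by omega), map_mul, Derivation.leibniz])
    (by simp only [flagA_of_ne n n (by omega), flagZh_self n hn, mul_one])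
    (by
      intro i h1 h2
      rw [hvD, flagV_Z n i _ h2 (by omega), if_pos rfl])
    (by
      intro i k h1 h2 h3 h4
      rw [hvD, flagV_Z n i _ h2 (by omega), if_neg (by omega), map_zero])
    (by
      intro i k h1 h2 h3 h4
      rw [hvD, flagV_A n i k h2 ⟨h3, h4⟩, map_zero])
    ((flagAK n 1 * (∏ k ∈ Finset.Ico 3 j, flagAK n k) * ∏ k ∈ Finset.Icc j n, flagBK n k)⁻¹)
  have hr := abs_rhs n j hj3 hjn (v (n - 1)) (flagAK n) (flagBK n) (flagAK n 1)
    (fun k => d (flagA n k)) (fun k => d (flagB n k)) (d (flagA n 1)) hA hB hA1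
    (by
      intro k h1 h2
      rw [hvD, flagE_A n k hn (by omega), flagAK])
    (by
      intro k h1 h2
      rw [hvD, flagE_B n k hn (by omega) (by omega), flagBK])
    (by
      rw [hvD, flagA_one, map_sub, flagE_A n 2 hn (by omega), flagE_B n 3 hn (by omega) (by omega),
        flagAK, flagA_one])
    (by simp only [hd, flagB_top, map_zero])
    (by
      intro k h1 h2
      rw [flagB_rec n k h2, dsub])
    (by rw [flagA_one, dsub])
  refine hl.trans ?_
  have e1 : dlog n (flagAK n 1 / flagBK n j) =
      (flagAK n 1)⁻¹ • d (flagA n 1) - (flagBK n j)⁻¹ • d (flagB n j) :=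
    dlog_div' n _ _ hA1 (hB j hj3 hjn)
  have e2 : (List.Ico 3 j).map (fun k =>
      ExteriorAlgebra.ι (FlagK n) (dlog n (flagAK n k / flagBK n j))) =
      (List.Ico 3 j).map (fun k => ExteriorAlgebra.ι (FlagK n)
        ((flagAK n k)⁻¹ • d (flagA n k) - (flagBK n j)⁻¹ • d (flagB n j))) := by
    apply List.map_congr_left
    intro k hk
    rw [List.Ico.mem] at hk
    exact congrArg _ (dlog_div' n _ _ (hA k hk.1 (by omega)) (hB j hj3 hjn))
  have e3 : (List.Ico (j + 1) (n + 1)).map (fun k =>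
      ExteriorAlgebra.ι (FlagK n) (dlog n (flagBK n k / flagBK n j))) =
      (List.Ico (j + 1) (n + 1)).map (fun k => ExteriorAlgebra.ι (FlagK n)
        ((flagBK n k)⁻¹ • d (flagB n k) - (flagBK n j)⁻¹ • d (flagB n j))) := by
    apply List.map_congr_left
    intro k hk
    rw [List.Ico.mem] at hk
    exact congrArg _ (dlog_div' n _ _ (hB k (by omega) (by omega)) (hB j hj3 hjn))
  rw [e1, e2, e3, hr, smul_smul ((-1 : FlagK n) ^ (n - j)), ← pow_add, Nat.sub_add_cancel hjn]

end
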